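/- arXiv:1808.03416 — 4 statements merged into one kernel-verified Lean document; each statement's English description precedes it below -/
import Mathlib

section
/- Let D be a bounded domain in a complex Banach space V. If D is complete with respect to the Carathéodory distance C_D, then D is a domain of holomorphy. -/
open Metric Set

/-- The inverse hyperbolic tangent, `artanh t = ½ log((1+t)/(1−t))`. -/
noncomputable def artanh (t : ℝ) : ℝ := (1 / 2) * Real.log ((1 + t) / (1 - t))

/-- The Carathéodory distance of a domain `D` in a complex Banach space: the supremum of
Poincaré distances of images under holomorphic maps `D → 𝔻`. -/
noncomputable def caraDist {V : Type*} [NormedAddCommGroup V] [NormedSpace ℂ V]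
    (D : Set V) (x y : V) : ℝ :=
  sSup {t : ℝ | ∃ f : V → ℂ, DifferentiableOn ℂ f D ∧ (∀ z ∈ D, ‖f z‖ < 1) ∧
    t = artanh ‖(f x - f y) / (1 - (starRingEnd ℂ) (f x) * f y)‖}

/-- A domain `D` in a complex Banach space is a domain of holomorphy if there is no pair of
open sets `U, W` with `U` connected, `D ∩ U ≠ ∅`, `U ⊄ D`, `∅ ≠ W ⊆ D ∩ U`, such that every
holomorphic function on `D` extends holomorphically to `U`, agreeing on `W`. -/
def IsDomainOfHolomorphy {V : Type*} [NormedAddCommGroup V] [NormedSpace ℂ V]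
    (D : Set V) : Prop :=
  ¬ ∃ U W : Set V, IsOpen U ∧ IsConnected U ∧ (D ∩ U).Nonempty ∧ ¬ U ⊆ D ∧
    IsOpen W ∧ W.Nonempty ∧ W ⊆ D ∩ U ∧
    ∀ f : V → ℂ, DifferentiableOn ℂ f D →
      ∃ F : V → ℂ, DifferentiableOn ℂ F U ∧ Set.EqOn f F W


open scoped Topology ComplexConjugate

lemma key_identity (a b : ℂ) :
    ‖1 - conj a * b‖ ^ 2 - ‖a - b‖ ^ 2 = (1 - ‖a‖ ^ 2) * (1 - ‖b‖ ^ 2) := by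
  simp only [Complex.sq_norm, Complex.normSq_apply, Complex.sub_re, Complex.sub_im,
    Complex.mul_re, Complex.mul_im, Complex.conj_re, Complex.conj_im, Complex.one_re,
    Complex.one_im]
  ring

lemma one_sub_sq_pos {a : ℂ} (ha : ‖a‖ < 1) : 0 < 1 - ‖a‖ ^ 2 := by
  have := norm_nonneg a
  nlinarith

lemma den_pos {a b : ℂ} (ha : ‖a‖ < 1) (hb : ‖b‖ < 1) : 0 < ‖1 - conj a * b‖ := by
  have h := key_identity a b
  have h1 := mul_pos (one_sub_sq_pos ha) (one_sub_sq_pos hb)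
  by_contra hc
  have h0 : ‖1 - conj a * b‖ = 0 := le_antisymm (not_lt.mp hc) (norm_nonneg _)
  rw [h0] at h
  nlinarith [sq_nonneg ‖a - b‖]

lemma num_lt_den {a b : ℂ} (ha : ‖a‖ < 1) (hb : ‖b‖ < 1) : ‖a - b‖ < ‖1 - conj a * b‖ := by
  have h := key_identity a b
  have h1 := mul_pos (one_sub_sq_pos ha) (one_sub_sq_pos hb)
  exact lt_of_pow_lt_pow_left₀ 2 (norm_nonneg _) (by linarith)

lemma pd_lt_one {a b : ℂ} (ha : ‖a‖ < 1) (hb : ‖b‖ < 1) :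
    ‖(a - b) / (1 - conj a * b)‖ < 1 := by
  rw [norm_div, div_lt_one (den_pos ha hb)]
  exact num_lt_den ha hb

lemma schwarz_pick {V : Type*} [NormedAddCommGroup V] [NormedSpace ℂ V] {f : V → ℂ} {c z : V}
    {r : ℝ} (hf : DifferentiableOn ℂ f (ball c r)) (hb : ∀ w ∈ ball c r, ‖f w‖ < 1)
    (hz : z ∈ ball c r) :
    ‖(f c - f z) / (1 - conj (f c) * f z)‖ ≤ dist z c / r := by
  have hr : 0 < r := nonempty_ball.1 ⟨z, hz⟩
  have hc : ‖f c‖ < 1 := hb c (mem_ball_self hr)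
  let g : V → ℂ := fun w => (f c - f w) / (1 - conj (f c) * f w)
  have hg : DifferentiableOn ℂ g (ball c r) := by
    simp only [g, div_eq_mul_inv]
    refine (hf.const_sub _).mul (DifferentiableOn.inv ((hf.const_mul _).const_sub _) ?_)
    intro w hw
    exact norm_pos_iff.1 (den_pos hc (hb w hw))
  have hgc : g c = 0 := by simp [g]
  have := Complex.dist_le_div_mul_dist_of_mapsTo_ball (R₂ := 1) hg (by
    intro w hw
    rw [hgc, mem_closedBall_zero_iff]
    exact (pd_lt_one hc (hb w hw)).le) hz
  rw [hgc, dist_zero_right] at this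
  calc _ ≤ 1 / r * dist z c := this
    _ = _ := by ring

lemma artanh_le_artanh {s t : ℝ} (hs : 0 ≤ s) (hst : s ≤ t) (ht : t < 1) :
    artanh s ≤ artanh t := by
  unfold artanh
  have h1 : 0 < 1 - t := by linarith
  have h2 : 0 < 1 - s := by linarith
  have : (1 + s) / (1 - s) ≤ (1 + t) / (1 - t) := by
    gcongr
    linarith
  have := Real.log_le_log (by positivity) this
  linarith

lemma half_le_artanh {t : ℝ} (hs : 0 ≤ t) (ht : t < 1) : t / 2 ≤ artanh t := by
  unfold artanh
  have h1 : 0 < 1 - t := by linarith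
  have h := Real.one_sub_inv_le_log_of_pos (x := (1 + t) / (1 - t)) (by positivity)
  have h2 : t ≤ 1 - ((1 + t) / (1 - t))⁻¹ := by
    rw [inv_div, le_sub_iff_add_le, ← le_sub_iff_add_le', div_le_iff₀ (by positivity)]
    nlinarith
  linarith

lemma artanh_zero_tendsto : Filter.Tendsto artanh (𝓝 0) (𝓝 0) := by
  have h : ContinuousAt artanh 0 := by
    unfold artanh
    refine continuousAt_const.mul (ContinuousAt.log ?_ (by norm_num))
    exact ContinuousAt.div (by fun_prop) (by fun_prop) (by norm_num)
  have h0 : artanh 0 = 0 := by simp [artanh]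
  simpa [ContinuousAt, h0] using h

/-- Identity theorem on a convex open set. -/
lemma ident_convex {V : Type*} [NormedAddCommGroup V] [NormedSpace ℂ V] {g : V → ℂ} {B : Set V}
    (hB : IsOpen B) (hBc : Convex ℝ B) (hg : DifferentiableOn ℂ g B) {q : V} (hq : q ∈ B)
    (h0 : g =ᶠ[𝓝 q] 0) : EqOn g 0 B := by
  intro w hw
  let L : ℂ → V := fun t => q + t • (w - q)
  have hLc : Continuous L := by fun_prop
  have hLd : Differentiable ℂ L := by fun_prop
  have hL0 : L 0 = q := by simp [L]
  have hL1 : L 1 = w := by simp [L]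
  have hopen : IsOpen (L ⁻¹' B) := hB.preimage hLc
  have hconv : Convex ℝ (L ⁻¹' B) := by
    intro s hs t ht a b ha hb hab
    have := hBc hs ht ha hb hab
    have e : L (a • s + b • t) = a • L s + b • L t := by
      have hq' : q = a • q + b • q := by rw [← add_smul, hab, one_smul]
      simp only [L, smul_add, add_smul, smul_assoc]
      nth_rewrite 1 [hq']
      abel
    change L (a • s + b • t) ∈ B
    rwa [e]
  have hd : DifferentiableOn ℂ (g ∘ L) (L ⁻¹' B) :=
    hg.comp hLd.differentiableOn (fun t ht => ht)
  have hev : (g ∘ L) =ᶠ[𝓝 0] 0 := by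
    have : Filter.Tendsto L (𝓝 0) (𝓝 q) := by simpa [hL0] using hLc.tendsto 0
    exact this.eventually h0
  have := (hd.analyticOnNhd hopen).eqOn_zero_of_preconnected_of_eventuallyEq_zero
    hconv.isPreconnected (z₀ := 0) (by simpa [hL0] using hq) hev (x := 1) (by simpa [hL1] using hw)
  simpa [hL1] using this

lemma ident {V : Type*} [NormedAddCommGroup V] [NormedSpace ℂ V] {g : V → ℂ} {U : Set V}
    (hU : IsOpen U) (hUc : IsPreconnected U) (hg : DifferentiableOn ℂ g U) {q : V} (hq : q ∈ U)
    (h0 : g =ᶠ[𝓝 q] 0) : EqOn g 0 U := by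
  let u := {x | g =ᶠ[𝓝 x] 0}
  have main : closure u ∩ U ⊆ u := by
    rintro x ⟨hx, hxU⟩
    obtain ⟨r, hr, hrU⟩ := Metric.isOpen_iff.1 hU x hxU
    obtain ⟨y, hy, hyr⟩ := Metric.mem_closure_iff.1 hx r hr
    have := ident_convex isOpen_ball (convex_ball x r) (hg.mono hrU)
      (by rwa [mem_ball'] : y ∈ ball x r) hy
    exact this.eventuallyEq_of_mem (ball_mem_nhds x hr)
  have hu : IsOpen u := isOpen_setOfPred_eventually_nhds
  have := hUc.subset_of_closure_inter_subset hu ⟨q, hq, h0⟩ main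
  intro x hx
  exact (this hx).self_of_nhds

/-- Weak triangle inequality for `1/(1-ρ²)`. -/
lemma weak_triangle {a b c : ℂ} {M N : ℝ} (ha : ‖a‖ < 1) (hb : ‖b‖ < 1) (hc : ‖c‖ < 1)
    (h1 : ‖1 - conj a * b‖ ^ 2 ≤ M * ((1 - ‖a‖ ^ 2) * (1 - ‖b‖ ^ 2)))
    (h2 : ‖1 - conj b * c‖ ^ 2 ≤ N * ((1 - ‖b‖ ^ 2) * (1 - ‖c‖ ^ 2))) :
    ‖1 - conj a * c‖ ^ 2 ≤ (4 * M * N) * ((1 - ‖a‖ ^ 2) * (1 - ‖c‖ ^ 2)) := by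
  have hbb := one_sub_sq_pos hb
  have e : (1 - conj a * c) * ((1 - ‖b‖ ^ 2 : ℝ) : ℂ) =
      (1 - conj a * b) * (1 - conj b * c) - conj (a - b) * (c - b) := by
    have : ((‖b‖ ^ 2 : ℝ) : ℂ) = conj b * b := by
      rw [Complex.conj_mul']; push_cast; rfl
    rw [Complex.ofReal_sub, this, map_sub]
    push_cast
    ring
  have hn : ‖1 - conj a * c‖ * (1 - ‖b‖ ^ 2) ≤ 2 * (‖1 - conj a * b‖ * ‖1 - conj b * c‖) := by
    have := congrArg norm e
    rw [norm_mul, Complex.norm_real, Real.norm_of_nonneg hbb.le] at this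
    rw [this]
    refine (norm_sub_le _ _).trans ?_
    rw [norm_mul, norm_mul, Complex.norm_conj, norm_sub_rev c b]
    have := mul_le_mul (num_lt_den ha hb).le (num_lt_den hb hc).le (norm_nonneg _) (norm_nonneg _)
    linarith
  have hsq : (‖1 - conj a * c‖ * (1 - ‖b‖ ^ 2)) ^ 2 ≤
      (2 * (‖1 - conj a * b‖ * ‖1 - conj b * c‖)) ^ 2 :=
    pow_le_pow_left₀ (by positivity) hn 2
  have hm := mul_le_mul h1 h2 (by positivity) ((sq_nonneg _).trans h1)
  refine le_of_mul_le_mul_right (a := (1 - ‖b‖ ^ 2) ^ 2) ?_ (by positivity)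
  nlinarith

section cara
variable {V : Type*} [NormedAddCommGroup V] [NormedSpace ℂ V]

/-- Uniform comparability. -/
def Comp (D : Set V) (x y : V) : Prop :=
  ∃ M : ℝ, ∀ f : V → ℂ, DifferentiableOn ℂ f D → (∀ z ∈ D, ‖f z‖ < 1) →
    ‖1 - conj (f x) * f y‖ ^ 2 ≤ M * ((1 - ‖f x‖ ^ 2) * (1 - ‖f y‖ ^ 2))

lemma pd_half {a b : ℂ} (ha : ‖a‖ < 1) (hb : ‖b‖ < 1)
    (h : ‖(a - b) / (1 - conj a * b)‖ ≤ 1 / 2) :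
    ‖1 - conj a * b‖ ^ 2 ≤ 2 * ((1 - ‖a‖ ^ 2) * (1 - ‖b‖ ^ 2)) := by
  rw [norm_div, div_le_iff₀ (den_pos ha hb)] at h
  have := key_identity a b
  have h2 := pow_le_pow_left₀ (norm_nonneg _) h 2
  nlinarith [sq_nonneg ‖1 - conj a * b‖]

lemma comp_symm_num (a b : ℂ) : ‖1 - conj a * b‖ = ‖1 - conj b * a‖ := by
  rw [← Complex.norm_conj]
  simp [mul_comm]

lemma Comp.symm' {D : Set V} {x y : V} (h : Comp D x y) : Comp D y x := by
  obtain ⟨M, hM⟩ := h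
  refine ⟨M, fun f hf hb => ?_⟩
  rw [comp_symm_num, mul_comm (1 - ‖f y‖ ^ 2)]
  exact hM f hf hb

lemma Comp.trans' {D : Set V} {x y z : V} (hx : x ∈ D) (hy : y ∈ D) (hz : z ∈ D)
    (h : Comp D x y) (h' : Comp D y z) : Comp D x z := by
  obtain ⟨M, hM⟩ := h
  obtain ⟨N, hN⟩ := h'
  exact ⟨4 * M * N, fun f hf hb => weak_triangle (hb _ hx) (hb _ hy) (hb _ hz)
    (hM f hf hb) (hN f hf hb)⟩

lemma comp_near {D : Set V} {x y : V} {r : ℝ} (hr : ball x r ⊆ D) (hy : y ∈ ball x (r / 2)) :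
    Comp D x y := by
  have h2 : 0 < r / 2 := nonempty_ball.1 ⟨y, hy⟩
  have hr0 : 0 < r := by linarith
  have hy' : y ∈ ball x r := ball_subset_ball (by linarith) hy
  refine ⟨2, fun f hf hb => pd_half (hb _ (hr (mem_ball_self hr0))) (hb _ (hr hy')) ?_⟩
  refine (schwarz_pick (hf.mono hr) (fun w hw => hb w (hr hw)) hy').trans ?_
  rw [div_le_iff₀ hr0]
  have := mem_ball.1 hy
  linarith

lemma comp_all {D : Set V} (hD : IsOpen D) (hDc : IsPreconnected D) {x y : V} (hx : x ∈ D)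
    (hy : y ∈ D) : Comp D x y := by
  let S := {w | w ∈ D ∧ Comp D x w}
  have hS : IsOpen S := by
    rw [Metric.isOpen_iff]
    rintro w ⟨hw, hxw⟩
    obtain ⟨r, hr, hrD⟩ := Metric.isOpen_iff.1 hD w hw
    refine ⟨r / 2, by positivity, fun v hv => ?_⟩
    have hvD : v ∈ D := hrD (ball_subset_ball (by linarith) hv)
    exact ⟨hvD, hxw.trans' hx hw hvD (comp_near hrD hv)⟩
  have hcl : closure S ∩ D ⊆ S := by
    rintro w ⟨hw, hwD⟩
    obtain ⟨r, hr, hrD⟩ := Metric.isOpen_iff.1 hD w hwD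
    obtain ⟨v, ⟨hv, hxv⟩, hvr⟩ := Metric.mem_closure_iff.1 hw (r / 2) (by positivity)
    exact ⟨hwD, hxv.trans' hx hv hwD (comp_near hrD (by rwa [mem_ball'])).symm'⟩
  obtain ⟨r, hr, hrD⟩ := Metric.isOpen_iff.1 hD x hx
  exact (hDc.subset_of_closure_inter_subset hS
    ⟨x, hx, hx, comp_near hrD (mem_ball_self (by positivity))⟩ hcl hy).2

lemma cara_bdd {D : Set V} (hD : IsOpen D) (hDc : IsPreconnected D) {x y : V} (hx : x ∈ D)
    (hy : y ∈ D) : BddAbove {t : ℝ | ∃ f : V → ℂ, DifferentiableOn ℂ f D ∧ (∀ z ∈ D, ‖f z‖ < 1) ∧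
    t = artanh ‖(f x - f y) / (1 - (starRingEnd ℂ) (f x) * f y)‖} := by
  obtain ⟨M, hM⟩ := comp_all hD hDc hx hy
  have hM1 : 1 ≤ M := by
    have := hM (fun _ => 0) (differentiableOn_const _) (by simp)
    simpa using this
  refine ⟨artanh (Real.sqrt (1 - 1 / M)), ?_⟩
  rintro t ⟨f, hf, hb, rfl⟩
  have hMp : 0 < M := by linarith
  have hlt : Real.sqrt (1 - 1 / M) < 1 := by
    rw [Real.sqrt_lt' one_pos]
    have : 0 < 1 / M := by positivity
    linarith
  refine artanh_le_artanh (norm_nonneg _) ?_ hlt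
  refine Real.le_sqrt_of_sq_le ?_
  have hd := den_pos (hb x hx) (hb y hy)
  have h1 := hM f hf hb
  have h2 := key_identity (f x) (f y)
  rw [norm_div, div_pow, div_le_iff₀ (by positivity)]
  rw [← h2] at h1
  have h3 : ‖1 - conj (f x) * f y‖ ^ 2 / M ≤
      ‖1 - conj (f x) * f y‖ ^ 2 - ‖f x - f y‖ ^ 2 := by
    rw [div_le_iff₀ hMp]; linarith
  have : (1 - 1 / M) * ‖1 - conj (f x) * f y‖ ^ 2 =
    ‖1 - conj (f x) * f y‖ ^ 2 - ‖1 - conj (f x) * f y‖ ^ 2 / M := by ring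
  linarith

/-- On a bounded domain the Caratheodory distance dominates the norm. -/
lemma norm_le_cara {D : Set V} (hD : IsOpen D) (hDc : IsPreconnected D) {R : ℝ} (hR : 0 < R)
    (hb : ∀ z ∈ D, ‖z‖ < R) {x y : V} (hx : x ∈ D) (hy : y ∈ D) :
    ‖x - y‖ ≤ 4 * R * caraDist D x y := by
  obtain ⟨l, hl, hlx⟩ := exists_dual_vector'' ℂ (x - y)
  let f : V → ℂ := fun z => l z / R
  have hfd : DifferentiableOn ℂ f D := by
    have : Differentiable ℂ f := by
      simp only [f, div_eq_mul_inv]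
      exact l.differentiable.mul_const _
    exact this.differentiableOn
  have hfb : ∀ z ∈ D, ‖f z‖ < 1 := by
    intro z hz
    simp only [f, norm_div, Complex.norm_real, Real.norm_of_nonneg hR.le]
    rw [div_lt_one hR]
    have := l.le_of_opNorm_le hl z
    have := hb z hz
    linarith
  have h1 := le_csSup (cara_bdd hD hDc hx hy) ⟨f, hfd, hfb, rfl⟩
  change _ ≤ caraDist D x y at h1
  have h2 := half_le_artanh (norm_nonneg _) (pd_lt_one (hfb x hx) (hfb y hy))
  have hd := den_pos (hfb x hx) (hfb y hy)
  have hd2 : ‖1 - conj (f x) * f y‖ ≤ 2 := by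
    refine (norm_sub_le _ _).trans ?_
    rw [norm_mul, Complex.norm_conj, norm_one]
    have := mul_le_one₀ (hfb x hx).le (norm_nonneg _) (hfb y hy).le
    linarith
  have h3 : ‖f x - f y‖ = ‖x - y‖ / R := by
    have : f x - f y = l (x - y) / R := by simp [f, sub_div]
    rw [this, hlx, norm_div]
    simp [abs_of_pos hR]
  have h4 : ‖f x - f y‖ / 2 ≤ ‖(f x - f y) / (1 - conj (f x) * f y)‖ := by
    rw [norm_div]
    gcongr
  rw [h3] at h4
  have h5 : ‖x - y‖ / R / 2 / 2 ≤ caraDist D x y := by linarith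
  have : ‖x - y‖ = 4 * R * (‖x - y‖ / R / 2 / 2) := by field_simp; norm_num
  rw [this]
  gcongr

end cara

/-- A bounded domain `D` in a complex Banach space which is complete with
respect to the Carathéodory distance is a domain of holomorphy. -/
theorem stmt_8
    {V : Type*} [NormedAddCommGroup V] [NormedSpace ℂ V] [CompleteSpace V]
    (D : Set V) (hD : IsOpen D) (hDc : IsConnected D) (hDb : Bornology.IsBounded D)
    (hcomplete : ∀ x : ℕ → V, (∀ n, x n ∈ D) →
      (∀ ε : ℝ, 0 < ε → ∃ N : ℕ, ∀ m ≥ N, ∀ n ≥ N, caraDist D (x m) (x n) < ε) →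
      ∃ z ∈ D, Filter.Tendsto (fun n => caraDist D (x n) z) Filter.atTop (nhds 0)) :
    IsDomainOfHolomorphy D := by
  rintro ⟨U, W, hU, hUc, -, hUD, hW, ⟨w, hw⟩, hWsub, hext⟩
  -- extensions of maps into the disc map into the disc
  have hdisc : ∀ f F : V → ℂ, DifferentiableOn ℂ f D → (∀ z ∈ D, ‖f z‖ < 1) →
      DifferentiableOn ℂ F U → EqOn f F W → ∀ u ∈ U, ‖F u‖ < 1 := by
    intro f F hf hb hF hfF u hu
    by_contra hcon
    have hne : ∀ z ∈ D, f z - F u ≠ 0 := by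
      intro z hz h
      rw [sub_eq_zero] at h
      exact hcon (h ▸ hb z hz)
    obtain ⟨G, hG, hfG⟩ := hext (fun z => (f z - F u)⁻¹) ((hf.sub_const _).inv hne)
    have := ident (g := fun z => (F z - F u) * G z - 1) hU hUc.isPreconnected
      (((hF.sub_const _).mul hG).sub_const _) (hWsub hw).2 (by
        filter_upwards [hW.mem_nhds hw] with z hz
        rw [← hfF hz, ← hfG hz]
        simp [mul_inv_cancel₀ (hne z (hWsub hz).1)]) hu
    simp at this
  let A : Set V := {u | u ∈ D ∩ U ∧ ∀ f F : V → ℂ, DifferentiableOn ℂ f D →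
    DifferentiableOn ℂ F U → EqOn f F W → f =ᶠ[𝓝 u] F}
  have hball : ∀ (x y : V) (r : ℝ), ball x r ⊆ D ∩ U → y ∈ A → y ∈ ball x r → ball x r ⊆ A := by
    intro x y r hr hy hyx z hz
    refine ⟨hr hz, fun f F hf hF hfF => ?_⟩
    have := ident_convex (g := fun v => f v - F v) isOpen_ball (convex_ball x r)
      ((hf.mono fun v hv => (hr hv).1).sub (hF.mono fun v hv => (hr hv).2)) hyx (by
        filter_upwards [hy.2 f F hf hF hfF] with v hv
        simp [hv])
    filter_upwards [isOpen_ball.mem_nhds hz] with v hv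
    exact sub_eq_zero.1 (this hv)
  have hAo : IsOpen A := by
    rw [Metric.isOpen_iff]
    intro x hx
    obtain ⟨r, hr, hrD⟩ := Metric.isOpen_iff.1 (hD.inter hU) x hx.1
    exact ⟨r, hr, hball x x r hrD hx (mem_ball_self hr)⟩
  have hwA : w ∈ A := ⟨hWsub hw, fun f F _ _ h => h.eventuallyEq_of_mem (hW.mem_nhds hw)⟩
  have hex : ∃ p ∈ U, p ∈ closure A ∧ p ∉ A := by
    by_contra! hcon
    exact hUD fun u hu => (hUc.isPreconnected.subset_of_closure_inter_subset hAo
      ⟨w, (hWsub hw).2, hwA⟩ (fun p hp => hcon p hp.2 hp.1) hu).1.1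
  obtain ⟨p, hpU, hpcl, hpA⟩ := hex
  have hpD : p ∉ D := by
    intro hpD
    obtain ⟨r, hr, hrD⟩ := Metric.isOpen_iff.1 (hD.inter hU) p ⟨hpD, hpU⟩
    obtain ⟨y, hy, hyr⟩ := Metric.mem_closure_iff.1 hpcl r hr
    exact hpA (hball p y r hrD hy (by rwa [mem_ball']) (mem_ball_self hr))
  obtain ⟨x, hxA, hxp⟩ := mem_closure_iff_seq_limit.1 hpcl
  obtain ⟨r, hr, hrU⟩ := Metric.isOpen_iff.1 hU p hpU
  have hest : ∀ a ∈ A, ∀ b ∈ A, dist a p < r / 2 → dist b a < r / 2 →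
      caraDist D a b ≤ artanh (dist b a / (r / 2)) := by
    intro a ha b hb hap hba
    refine csSup_le ⟨_, fun _ => 0, differentiableOn_const _, by simp, rfl⟩ ?_
    rintro t ⟨f, hf, hfb, rfl⟩
    obtain ⟨F, hF, hfF⟩ := hext f hf
    have hFb := hdisc f F hf hfb hF hfF
    rw [(ha.2 f F hf hF hfF).self_of_nhds, (hb.2 f F hf hF hfF).self_of_nhds]
    have hsub : ball a (r / 2) ⊆ U := fun v hv => hrU (by
      have := dist_triangle v a p
      rw [mem_ball] at hv ⊢
      linarith)
    refine artanh_le_artanh (norm_nonneg _)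
      (schwarz_pick (hF.mono hsub) (fun v hv => hFb v (hsub hv)) hba) ?_
    rwa [div_lt_one (by positivity)]
  obtain ⟨z, hz, hlim⟩ := hcomplete x (fun n => (hxA n).1.1) (by
    intro ε hε
    obtain ⟨δ, hδ, hδε⟩ := Metric.eventually_nhds_iff.1 (artanh_zero_tendsto.eventually_lt_const hε)
    obtain ⟨N, hN⟩ := Metric.cauchySeq_iff.1 hxp.cauchySeq (min (r / 2) (δ * (r / 2)))
      (by positivity)
    obtain ⟨N', hN'⟩ := Metric.tendsto_atTop.1 hxp (r / 2) (by positivity)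
    refine ⟨max N N', fun m hm n hn => ?_⟩
    have h1 := hN n (le_of_max_le_left hn) m (le_of_max_le_left hm)
    rw [lt_min_iff] at h1
    refine (hest _ (hxA m) _ (hxA n) (hN' m (le_of_max_le_right hm)) h1.1).trans_lt (hδε ?_)
    rw [dist_zero_right, Real.norm_of_nonneg (by positivity), div_lt_iff₀ (by positivity)]
    exact h1.2)
  obtain ⟨R, hR, hRb⟩ := hDb.exists_pos_norm_lt
  have hxz : Filter.Tendsto x Filter.atTop (𝓝 z) := by
    rw [tendsto_iff_norm_sub_tendsto_zero]
    refine squeeze_zero (fun n => norm_nonneg _)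
      (fun n => norm_le_cara hD hDc.isPreconnected hR hRb (hxA n).1.1 hz) ?_
    simpa using hlim.const_mul (4 * R)
  exact hpD (tendsto_nhds_unique hxp hxz ▸ hz)
end

section
/- Every holomorphic homogeneous regular (HHR) bounded domain D in a complex Banach space V is complete with respect to the Carathéodory distance C_D, and hence is a domain of holomorphy. -/
open Metric Set

/-- The squeezing function of a bounded domain `D ⊆ V`, via holomorphic embeddings into the
open unit ball of the Hilbert space `H`. -/
noncomputable def squeezingFun (H : Type*) [NormedAddCommGroup H] [InnerProductSpace ℂ H]
    {V : Type*} [NormedAddCommGroup V] [NormedSpace ℂ V] (D : Set V) (p : V) : ℝ :=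
  sSup {r : ℝ | 0 < r ∧ ∃ f : V → H, ∃ g : H → V,
    DifferentiableOn ℂ f D ∧ IsOpen (f '' D) ∧ Set.InjOn f D ∧
    DifferentiableOn ℂ g (f '' D) ∧ (∀ z ∈ D, g (f z) = z) ∧
    f '' D ⊆ ball (0 : H) 1 ∧ f p = 0 ∧ ball (0 : H) r ⊆ f '' D}

namespace HHR

open Filter Topology

/-- pseudo-hyperbolic distance -/
noncomputable def rho (a b : ℂ) : ℝ := ‖(a - b) / (1 - (starRingEnd ℂ) a * b)‖

lemma key_id (a b : ℂ) : ‖1 - (starRingEnd ℂ) a * b‖ ^ 2 - ‖a - b‖ ^ 2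
    = (1 - ‖a‖ ^ 2) * (1 - ‖b‖ ^ 2) := by
  simp only [Complex.sq_norm, Complex.normSq_apply]
  simp
  ring

lemma den_pos {a b : ℂ} (ha : ‖a‖ < 1) (hb : ‖b‖ < 1) : 0 < ‖1 - (starRingEnd ℂ) a * b‖ := by
  have h := key_id a b
  have h1 : 0 < (1 - ‖a‖ ^ 2) * (1 - ‖b‖ ^ 2) := by
    apply mul_pos <;> nlinarith [norm_nonneg a, norm_nonneg b]
  by_contra hc
  have : ‖1 - (starRingEnd ℂ) a * b‖ = 0 := le_antisymm (not_lt.1 hc) (norm_nonneg _)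
  rw [this] at h
  nlinarith [sq_nonneg ‖a - b‖]

lemma den_ne {a b : ℂ} (ha : ‖a‖ < 1) (hb : ‖b‖ < 1) : 1 - (starRingEnd ℂ) a * b ≠ 0 :=
  norm_pos_iff.1 (den_pos ha hb)

lemma num_lt {a b : ℂ} (ha : ‖a‖ < 1) (hb : ‖b‖ < 1) :
    ‖a - b‖ < ‖1 - (starRingEnd ℂ) a * b‖ := by
  have h := key_id a b
  have h1 : 0 < (1 - ‖a‖ ^ 2) * (1 - ‖b‖ ^ 2) := by
    apply mul_pos <;> nlinarith [norm_nonneg a, norm_nonneg b]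
  exact lt_of_pow_lt_pow_left₀ 2 (norm_nonneg _) (by linarith)

lemma rho_nonneg (a b : ℂ) : 0 ≤ rho a b := norm_nonneg _

lemma rho_lt_one {a b : ℂ} (ha : ‖a‖ < 1) (hb : ‖b‖ < 1) : rho a b < 1 := by
  rw [rho, norm_div, div_lt_one (den_pos ha hb)]
  exact num_lt ha hb

lemma den_symm (a b : ℂ) : ‖1 - (starRingEnd ℂ) a * b‖ = ‖1 - (starRingEnd ℂ) b * a‖ := by
  rw [← RCLike.norm_conj (1 - (starRingEnd ℂ) a * b)]
  simp [mul_comm]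

lemma rho_symm (a b : ℂ) : rho a b = rho b a := by
  rw [rho, rho, norm_div, norm_div, den_symm, norm_sub_rev]

lemma rho_ge {a b : ℂ} (ha : ‖a‖ < 1) (hb : ‖b‖ < 1) : ‖a - b‖ ≤ 2 * rho a b := by
  have hd := den_pos ha hb
  have h2 : ‖1 - (starRingEnd ℂ) a * b‖ ≤ 2 := by
    refine (norm_sub_le _ _).trans ?_
    rw [norm_mul, RCLike.norm_conj, norm_one]
    nlinarith [norm_nonneg a, norm_nonneg b]
  have : ‖a - b‖ = rho a b * ‖1 - (starRingEnd ℂ) a * b‖ := by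
    rw [rho, norm_div, div_mul_cancel₀ _ hd.ne']
  rw [this]
  nlinarith [rho_nonneg a b]

lemma one_sub_rho {a b : ℂ} (ha : ‖a‖ < 1) (hb : ‖b‖ < 1) :
    (1 - rho a b ^ 2) * ‖1 - (starRingEnd ℂ) a * b‖ ^ 2 = (1 - ‖a‖ ^ 2) * (1 - ‖b‖ ^ 2) := by
  have hd := den_pos ha hb
  rw [← key_id, rho, norm_div, sub_mul, one_mul, div_pow, div_mul_cancel₀ _ (pow_pos hd 2).ne']

lemma den_tri {a b c : ℂ} (ha : ‖a‖ < 1) (hb : ‖b‖ < 1) (hc : ‖c‖ < 1) :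
    (1 - ‖b‖ ^ 2) * ‖1 - (starRingEnd ℂ) a * c‖
      ≤ 2 * (‖1 - (starRingEnd ℂ) a * b‖ * ‖1 - (starRingEnd ℂ) b * c‖) := by
  have e : ((1 - ‖b‖ ^ 2 : ℝ) : ℂ) * (1 - (starRingEnd ℂ) a * c)
      = (1 - (starRingEnd ℂ) a * b) * (1 - (starRingEnd ℂ) b * c)
        - (starRingEnd ℂ) (a - b) * (c - b) := by
    have : ((‖b‖ ^ 2 : ℝ) : ℂ) = (starRingEnd ℂ) b * b := by
      rw [Complex.conj_mul']; push_cast; rfl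
    rw [Complex.ofReal_sub, this, map_sub]
    push_cast
    ring
  have hb2 : 0 ≤ 1 - ‖b‖ ^ 2 := by nlinarith [norm_nonneg b]
  have e2 := congrArg norm e
  rw [norm_mul, Complex.norm_real, Real.norm_of_nonneg hb2] at e2
  rw [e2]
  refine (norm_sub_le _ _).trans ?_
  rw [norm_mul, norm_mul, RCLike.norm_conj]
  have h1 := num_lt ha hb
  have h2 := num_lt hb hc
  rw [norm_sub_rev] at h2
  have := mul_le_mul h1.le h2.le (norm_nonneg _) (norm_nonneg _)
  linarith

lemma rho_tri {a b c : ℂ} (ha : ‖a‖ < 1) (hb : ‖b‖ < 1) (hc : ‖c‖ < 1) :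
    (1 - rho a b ^ 2) * (1 - rho b c ^ 2) ≤ 4 * (1 - rho a c ^ 2) := by
  have hab := one_sub_rho ha hb
  have hbc := one_sub_rho hb hc
  have hac := one_sub_rho ha hc
  have dab := den_pos ha hb
  have dbc := den_pos hb hc
  have dac := den_pos ha hc
  have ht := den_tri ha hb hc
  set A := ‖1 - (starRingEnd ℂ) a * b‖
  set B := ‖1 - (starRingEnd ℂ) b * c‖
  set C := ‖1 - (starRingEnd ℂ) a * c‖
  have ga : 0 < 1 - ‖a‖ ^ 2 := by nlinarith [norm_nonneg a]
  have gb : 0 < 1 - ‖b‖ ^ 2 := by nlinarith [norm_nonneg b]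
  have gc : 0 < 1 - ‖c‖ ^ 2 := by nlinarith [norm_nonneg c]
  have ht2 : ((1 - ‖b‖ ^ 2) * C) ^ 2 ≤ (2 * (A * B)) ^ 2 := by
    apply pow_le_pow_left₀ (by positivity) ht
  have hpos : 0 < A ^ 2 * B ^ 2 * C ^ 2 := by positivity
  refine le_of_mul_le_mul_right ?_ hpos
  calc (1 - rho a b ^ 2) * (1 - rho b c ^ 2) * (A ^ 2 * B ^ 2 * C ^ 2)
      = ((1 - rho a b ^ 2) * A ^ 2) * ((1 - rho b c ^ 2) * B ^ 2) * C ^ 2 := by ring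
    _ = ((1 - ‖a‖ ^ 2) * (1 - ‖c‖ ^ 2)) * ((1 - ‖b‖ ^ 2) * C) ^ 2 := by rw [hab, hbc]; ring
    _ ≤ ((1 - ‖a‖ ^ 2) * (1 - ‖c‖ ^ 2)) * (2 * (A * B)) ^ 2 := by gcongr
    _ = 4 * ((1 - rho a c ^ 2) * C ^ 2) * (A ^ 2 * B ^ 2) := by rw [hac]; ring
    _ = _ := by ring

lemma artanh_mono {s t : ℝ} (hs : 0 ≤ s) (hst : s ≤ t) (ht : t < 1) : artanh s ≤ artanh t := by
  unfold artanh
  have h1 : 0 < 1 - t := by linarith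
  have h2 : 0 < 1 - s := by linarith
  have h3 : 0 ≤ 1 + t := by linarith
  gcongr

lemma artanh_zero : artanh 0 = 0 := by simp [artanh]

lemma artanh_nonneg {t : ℝ} (h0 : 0 ≤ t) (h1 : t < 1) : 0 ≤ artanh t := by
  rw [← artanh_zero]; exact artanh_mono le_rfl h0 h1

lemma le_artanh {t : ℝ} (h0 : 0 ≤ t) (h1 : t < 1) : t ≤ artanh t := by
  unfold artanh
  have h2 : 0 < 1 - t := by linarith
  rw [Real.log_div (by linarith) h2.ne']
  have := Real.hasSum_log_sub_log_of_abs_lt_one (x := t) (by rwa [abs_of_nonneg h0])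
  have h3 := this.summable.le_tsum 0 (fun i _ => by positivity)
  rw [this.tsum_eq] at h3
  simp at h3
  linarith

lemma artanh_cont : ContinuousAt artanh 0 := by
  unfold artanh
  refine ContinuousAt.mul continuousAt_const (ContinuousAt.log ?_ (by simp))
  refine ContinuousAt.div (by fun_prop) (by fun_prop) (by simp)

section
variable {V : Type*} [NormedAddCommGroup V] [NormedSpace ℂ V]

/-- admissible maps -/
def Adm (D : Set V) (f : V → ℂ) : Prop := DifferentiableOn ℂ f D ∧ ∀ z ∈ D, ‖f z‖ < 1

lemma schwarz {f : V → ℂ} {c z : V} {R : ℝ} (hf : Adm (ball c R) f) (hz : z ∈ ball c R) :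
    rho (f z) (f c) ≤ dist z c / R := by
  have hR : 0 < R := nonempty_ball.1 ⟨z, hz⟩
  have hc : ‖f c‖ < 1 := hf.2 c (mem_ball_self hR)
  let h : V → ℂ := fun w => (f w - f c) / (1 - (starRingEnd ℂ) (f c) * f w)
  have hh : ∀ w, ‖h w‖ = rho (f w) (f c) := by
    intro w
    rw [rho, norm_div, norm_div, den_symm]
  have h0 : h c = 0 := by simp [h]
  have hd : DifferentiableOn ℂ h (ball c R) := by
    simp only [h, div_eq_mul_inv]
    refine DifferentiableOn.mul (hf.1.sub_const _) (DifferentiableOn.fun_inv ?_ ?_)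
    · exact (differentiableOn_const _).sub ((differentiableOn_const _).mul hf.1)
    · intro w hw
      exact den_ne hc (hf.2 w hw)
  have hm : MapsTo h (ball c R) (closedBall (h c) 1) := by
    intro w hw
    rw [h0, mem_closedBall_zero_iff, hh]
    exact (rho_lt_one (hf.2 w hw) hc).le
  have := Complex.dist_le_div_mul_dist_of_mapsTo_ball hd hm hz
  rw [h0, dist_zero_right, hh] at this
  rw [div_eq_inv_mul]
  simpa using this

lemma caraDist_nonneg {D : Set V} {x y : V} (hx : x ∈ D) (hy : y ∈ D) : 0 ≤ caraDist D x y := by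
  apply Real.sSup_nonneg
  rintro t ⟨f, h1, h2, rfl⟩
  exact artanh_nonneg (rho_nonneg _ _) (rho_lt_one (h2 x hx) (h2 y hy))

lemma caraDist_le {D : Set V} {x y : V} {s : ℝ} (hs : s < 1)
    (h : ∀ f, Adm D f → rho (f x) (f y) ≤ s) : caraDist D x y ≤ artanh s := by
  apply csSup_le
  · exact ⟨_, fun _ => 0, differentiableOn_const _, by simp, rfl⟩
  · rintro t ⟨f, h1, h2, rfl⟩
    exact artanh_mono (rho_nonneg _ _) (h f ⟨h1, h2⟩) hs

lemma bound {D : Set V} (hD : IsOpen D) (hDc : IsConnected D) {x y : V} (hx : x ∈ D)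
    (hy : y ∈ D) : ∃ δ : ℝ, 0 < δ ∧ ∀ f, Adm D f → δ ≤ 1 - rho (f x) (f y) ^ 2 := by
  let S : Set V := {y | y ∈ D ∧ ∃ δ : ℝ, 0 < δ ∧ ∀ f, Adm D f → δ ≤ 1 - rho (f x) (f y) ^ 2}
  have step : ∀ (c : V) (R : ℝ), ball c R ⊆ D → ∀ z ∈ ball c (R / 2), ∀ f, Adm D f →
      (1 : ℝ) / 2 ≤ 1 - rho (f z) (f c) ^ 2 := by
    intro c R hb z hz f hf
    have hR : 0 < R := by
      have := nonempty_ball.1 ⟨z, hz⟩; linarith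
    have hz' : z ∈ ball c R := ball_subset_ball (by linarith) hz
    have h1 := schwarz (f := f) (c := c) (z := z) (R := R)
      ⟨hf.1.mono hb, fun w hw => hf.2 w (hb hw)⟩ hz'
    have h2 : dist z c / R ≤ 1 / 2 := by
      rw [div_le_iff₀ hR]
      have := mem_ball.1 hz
      linarith
    have h3 := h1.trans h2
    nlinarith [rho_nonneg (f z) (f c)]
  have ext : ∀ y ∈ S, ∀ z ∈ D, (∀ f, Adm D f → (1 : ℝ) / 2 ≤ 1 - rho (f y) (f z) ^ 2) → z ∈ S := by
    rintro y ⟨hy, δ, hδ, h⟩ z hz hyz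
    refine ⟨hz, δ / 8, by positivity, fun f hf => ?_⟩
    have h1 := rho_tri (hf.2 x hx) (hf.2 y hy) (hf.2 z hz)
    have h2 := mul_le_mul (h f hf) (hyz f hf) (by norm_num) (hδ.le.trans (h f hf))
    linarith
  have hxS : x ∈ S := by
    refine ⟨hx, 1, one_pos, fun f hf => ?_⟩
    simp [rho]
  have hSo : IsOpen S := by
    rw [Metric.isOpen_iff]
    intro y hy
    obtain ⟨R, hR, hb⟩ := Metric.isOpen_iff.1 hD y hy.1
    refine ⟨R / 2, by positivity, fun z hz => ?_⟩
    refine ext y hy z (hb (ball_subset_ball (by linarith) hz)) fun f hf => ?_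
    rw [rho_symm]
    exact step y R hb z hz f hf
  have hsub : D ⊆ S := by
    refine hDc.isPreconnected.subset_of_closure_inter_subset hSo ⟨x, hx, hxS⟩ ?_
    rintro z ⟨hz, hzD⟩
    obtain ⟨R, hR, hb⟩ := Metric.isOpen_iff.1 hD z hzD
    obtain ⟨y, hyS, hy⟩ := Metric.mem_closure_iff.1 hz (R / 2) (by positivity)
    refine ext y hyS z hzD fun f hf => step z R hb y ?_ f hf
    rwa [mem_ball, dist_comm]
  exact (hsub hy).2

lemma le_caraDist {D : Set V} (hD : IsOpen D) (hDc : IsConnected D) {x y : V} (hx : x ∈ D)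
    (hy : y ∈ D) {f : V → ℂ} (hf : Adm D f) : rho (f x) (f y) ≤ caraDist D x y := by
  refine (le_artanh (rho_nonneg _ _) (rho_lt_one (hf.2 x hx) (hf.2 y hy))).trans ?_
  obtain ⟨δ, hδ, h⟩ := bound hD hDc hx hy
  refine le_csSup ⟨artanh (Real.sqrt (1 - δ)), ?_⟩ ⟨f, hf.1, hf.2, rfl⟩
  rintro t ⟨g, h1, h2, rfl⟩
  refine artanh_mono (rho_nonneg _ _) ?_ ?_
  · exact Real.le_sqrt_of_sq_le (by have := h g ⟨h1, h2⟩; unfold rho at this; linarith)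
  · rw [Real.sqrt_lt' one_pos]; linarith

lemma caraDist_tendsto {D : Set V} (hD : IsOpen D) {x : ℕ → V} (hx : ∀ n, x n ∈ D) {z : V}
    (hz : z ∈ D) (h : Tendsto x atTop (𝓝 z)) :
    Tendsto (fun n => caraDist D (x n) z) atTop (𝓝 0) := by
  obtain ⟨R, hR, hb⟩ := Metric.isOpen_iff.1 hD z hz
  have ht : Tendsto (fun n => dist (x n) z / R) atTop (𝓝 0) := by
    have := (tendsto_iff_dist_tendsto_zero.1 h).div_const R
    simpa using this
  have ht2 : Tendsto (fun n => artanh (dist (x n) z / R)) atTop (𝓝 0) := by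
    have := artanh_cont.tendsto.comp ht
    rwa [artanh_zero] at this
  refine squeeze_zero' (Eventually.of_forall fun n => caraDist_nonneg (hx n) hz) ?_ ht2
  filter_upwards [h.eventually (ball_mem_nhds z hR)] with n hn
  refine caraDist_le ?_ fun f hf => schwarz ⟨hf.1.mono hb, fun w hw => hf.2 w (hb hw)⟩ hn
  rwa [div_lt_one hR]

lemma complete {H : Type*} [NormedAddCommGroup H] [InnerProductSpace ℂ H] [CompleteSpace H]
    {D : Set V} (hD : IsOpen D) (hDc : IsConnected D)
    (hHHR : ∃ r : ℝ, 0 < r ∧ ∀ p ∈ D, r ≤ squeezingFun H D p)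
    {x : ℕ → V} (hx : ∀ n, x n ∈ D)
    (hC : ∀ ε : ℝ, 0 < ε → ∃ N : ℕ, ∀ m ≥ N, ∀ n ≥ N, caraDist D (x m) (x n) < ε) :
    ∃ z ∈ D, Tendsto x atTop (𝓝 z) := by
  obtain ⟨r, hr, hsq⟩ := hHHR
  obtain ⟨N, hN⟩ := hC (r / 8) (by positivity)
  have hlt : r / 2 < squeezingFun H D (x N) := lt_of_lt_of_le (by linarith) (hsq _ (hx N))
  unfold squeezingFun at hlt
  obtain ⟨r', ⟨-, f, g, hf, hfo, -, hg, hgf, hfb, hf0, hball⟩, hr'⟩ :=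
    exists_lt_of_lt_csSup (by
      by_contra hne
      rw [not_nonempty_iff_eq_empty] at hne
      rw [hne, Real.sSup_empty] at hlt
      linarith) hlt
  have hdist : ∀ m n, ‖f (x m) - f (x n)‖ ≤ 2 * caraDist D (x m) (x n) := by
    intro m n
    obtain ⟨l, hl, hle⟩ := exists_dual_vector'' ℂ (f (x m) - f (x n))
    have hadm : Adm D (fun w => l (f w)) := by
      refine ⟨l.differentiable.comp_differentiableOn hf, fun w hw => ?_⟩
      have h1 := l.le_of_opNorm_le hl (f w)
      have h2 := mem_ball_zero_iff.1 (hfb (mem_image_of_mem f hw))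
      linarith
    have h1 := le_caraDist hD hDc (hx m) (hx n) hadm
    have h2 := rho_ge (hadm.2 _ (hx m)) (hadm.2 _ (hx n))
    simp only at h1 h2
    rw [← map_sub, hle, RCLike.norm_ofReal, abs_norm] at h2
    linarith
  have hcau : CauchySeq (fun n => f (x n)) := by
    rw [Metric.cauchySeq_iff]
    intro ε hε
    obtain ⟨M, hM⟩ := hC (ε / 2) (by positivity)
    refine ⟨M, fun m hm n hn => ?_⟩
    rw [dist_eq_norm]
    have := hdist m n
    have := hM m hm n hn
    linarith
  obtain ⟨y, hy⟩ := cauchySeq_tendsto_of_complete hcau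
  have hyn : ‖y‖ ≤ r / 4 := by
    refine le_of_tendsto hy.norm ?_
    filter_upwards [eventually_ge_atTop N] with n hn
    have h1 := hdist n N
    have h2 := hN n hn N le_rfl
    rw [hf0, sub_zero] at h1
    linarith
  have hyD : y ∈ f '' D := hball (mem_ball_zero_iff.2 (by linarith))
  have hgc : ContinuousAt g y := (hg.differentiableAt (hfo.mem_nhds hyD)).continuousAt
  have hgy : g y ∈ D := by
    obtain ⟨w, hw, rfl⟩ := hyD
    rwa [hgf w hw]
  refine ⟨g y, hgy, ?_⟩
  have := hgc.tendsto.comp hy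
  refine this.congr fun n => hgf _ (hx n)

lemma ident_ball {F G : V → ℂ} {p q : V} {R : ℝ} (hF : DifferentiableOn ℂ F (ball p R))
    (hG : DifferentiableOn ℂ G (ball p R)) (hq : q ∈ ball p R) (h : F =ᶠ[𝓝 q] G) :
    EqOn F G (ball p R) := by
  intro y hy
  let L : ℂ → V := fun t => q + t • (y - q)
  have hL : Differentiable ℂ L := by
    intro t; fun_prop
  have hLo : IsOpen (L ⁻¹' ball p R) := isOpen_ball.preimage hL.continuous
  have hconv : Convex ℝ (L ⁻¹' ball p R) := by
    intro s hs t ht a b ha hb hab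
    have : L (a • s + b • t) = a • L s + b • L t := by
      have hb' : b = 1 - a := by linarith
      subst hb'
      simp only [L, ← Complex.coe_smul]
      push_cast
      module
    rw [mem_preimage, this]
    exact convex_ball p R hs ht ha hb hab
  have hL0 : L 0 = q := by simp [L]
  have hL1 : L 1 = y := by simp [L]
  have hFa : AnalyticOnNhd ℂ (F ∘ L) (L ⁻¹' ball p R) :=
    (hF.comp hL.differentiableOn (fun _ h => h)).analyticOnNhd hLo
  have hGa : AnalyticOnNhd ℂ (G ∘ L) (L ⁻¹' ball p R) :=
    (hG.comp hL.differentiableOn (fun _ h => h)).analyticOnNhd hLo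
  have h0 : (0 : ℂ) ∈ L ⁻¹' ball p R := by rw [mem_preimage, hL0]; exact hq
  have h1 : (1 : ℂ) ∈ L ⁻¹' ball p R := by rw [mem_preimage, hL1]; exact hy
  have he : F ∘ L =ᶠ[𝓝 0] G ∘ L := by
    have : Tendsto L (𝓝 0) (𝓝 q) := by
      rw [← hL0]; exact hL.continuous.tendsto 0
    exact this.eventually h
  have := hFa.eqOn_of_preconnected_of_eventuallyEq hGa hconv.isPreconnected h0 he h1
  simpa [hL1] using this

lemma ident {F G : V → ℂ} {U W : Set V} (hU : IsOpen U) (hUc : IsPreconnected U)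
    (hF : DifferentiableOn ℂ F U) (hG : DifferentiableOn ℂ G U)
    (hW : IsOpen W) (hWU : (U ∩ W).Nonempty) (h : EqOn F G W) : EqOn F G U := by
  let S : Set V := {p | F =ᶠ[𝓝 p] G}
  have hSo : IsOpen S := isOpen_setOfPred_eventually_nhds
  have hWS : W ⊆ S := fun w hw => h.eventuallyEq_of_mem (hW.mem_nhds hw)
  have hs : U ⊆ S := by
    refine hUc.subset_of_closure_inter_subset hSo (hWU.mono (inter_subset_inter_right _ hWS)) ?_
    rintro z ⟨hz, hzU⟩
    obtain ⟨R, hR, hb⟩ := Metric.isOpen_iff.1 hU z hzU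
    obtain ⟨y, hyS, hy⟩ := Metric.mem_closure_iff.1 hz R hR
    have := ident_ball (hF.mono hb) (hG.mono hb) (q := y) (by rwa [mem_ball, dist_comm]) hyS
    exact this.eventuallyEq_of_mem (ball_mem_nhds z hR)
  exact fun z hz => (hs hz).eq_of_nhds

lemma dom_hol {D : Set V} (hD : IsOpen D)
    (hcomp : ∀ x : ℕ → V, (∀ n, x n ∈ D) →
      (∀ ε : ℝ, 0 < ε → ∃ N : ℕ, ∀ m ≥ N, ∀ n ≥ N, caraDist D (x m) (x n) < ε) →
      ∃ z ∈ D, Tendsto x atTop (𝓝 z)) : IsDomainOfHolomorphy D := by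
  rintro ⟨U, W, hU, hUc, -, hUD, hW, ⟨w, hw⟩, hWs, hext⟩
  have hDU : IsOpen (D ∩ U) := hD.inter hU
  set Ω := connectedComponentIn (D ∩ U) w with hΩ
  have hΩo : IsOpen Ω := hDU.connectedComponentIn
  have hΩs : Ω ⊆ D ∩ U := connectedComponentIn_subset _ _
  have hwΩ : w ∈ Ω := mem_connectedComponentIn (hWs hw)
  have hΩc : IsPreconnected Ω := isPreconnected_connectedComponentIn
  -- extension agrees on Ω
  have hext2 : ∀ f : V → ℂ, DifferentiableOn ℂ f D →
      ∃ F : V → ℂ, DifferentiableOn ℂ F U ∧ EqOn f F Ω := by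
    intro f hf
    obtain ⟨F, hF, hfF⟩ := hext f hf
    exact ⟨F, hF, ident hΩo hΩc (hf.mono fun z hz => (hΩs hz).1)
      (hF.mono fun z hz => (hΩs hz).2) hW ⟨w, hwΩ, hw⟩ hfF⟩
  have hext3 : ∀ f, Adm D f → ∃ F, Adm U F ∧ EqOn f F Ω := by
    intro f hf
    obtain ⟨F, hF, hfF⟩ := hext2 f hf.1
    refine ⟨F, ⟨hF, fun u hu => ?_⟩, hfF⟩
    by_contra hc
    rw [not_lt] at hc
    have hne : ∀ z ∈ D, f z - F u ≠ 0 := by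
      intro z hz h0
      have := hf.2 z hz
      rw [sub_eq_zero.1 h0] at this
      linarith
    obtain ⟨G, hG, hfG⟩ := hext2 (fun z => (f z - F u)⁻¹) ((hf.1.sub_const _).fun_inv hne)
    have := ident (F := fun z => G z * (F z - F u)) (G := fun _ => 1) hU hUc.isPreconnected
      (hG.mul (hF.sub_const _)) (differentiableOn_const _) hΩo ⟨w, (hWs hw).2, hwΩ⟩
      (fun z hz => by
        simp only
        rw [← hfG hz, ← hfF hz]
        exact inv_mul_cancel₀ (hne z (hΩs hz).1)) hu
    simp at this
  obtain ⟨a, haU, haΩ, haD⟩ : ∃ a ∈ U, a ∈ closure Ω ∧ a ∉ D := by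
    by_contra! hcon
    apply hUD
    refine Subset.trans ?_ (hΩs.trans inter_subset_left)
    refine hUc.isPreconnected.subset_of_closure_inter_subset hΩo ⟨w, (hWs hw).2, hwΩ⟩ ?_
    rintro a ⟨ha, haU⟩
    have haDU : a ∈ D ∩ U := ⟨hcon a haU ha, haU⟩
    have hmem := mem_connectedComponentIn haDU
    obtain ⟨b, hb1, hb2⟩ := mem_closure_iff.1 ha _ hDU.connectedComponentIn hmem
    rw [hΩ, connectedComponentIn_eq hb2, ← connectedComponentIn_eq hb1]
    exact hmem
  obtain ⟨x, hxΩ, hxa⟩ := mem_closure_iff_seq_limit.1 haΩ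
  obtain ⟨R, hR, hb⟩ := Metric.isOpen_iff.1 hU a haU
  obtain ⟨z, hz, hxz⟩ := hcomp x (fun n => (hΩs (hxΩ n)).1) (by
    intro ε hε
    have hev : ∀ᶠ t in 𝓝 (0 : ℝ), artanh t < ε := by
      have := artanh_cont.tendsto
      rw [artanh_zero] at this
      exact this.eventually (gt_mem_nhds hε)
    obtain ⟨η, hη, hev⟩ := Metric.eventually_nhds_iff.1 hev
    have hmin : 0 < min (R / 2) (min 1 η * (R / 4)) := by positivity
    obtain ⟨N, hN⟩ := Metric.tendsto_atTop.1 hxa _ hmin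
    refine ⟨N, fun m hm n hn => ?_⟩
    have hm' := lt_min_iff.1 (hN m hm)
    have hn' := lt_min_iff.1 (hN n hn)
    have hd : dist (x m) (x n) < min 1 η * (R / 2) := by
      have := dist_triangle_right (x m) (x n) a
      linarith
    have hd2 : dist (x m) (x n) / (R / 2) < min 1 η := by
      rwa [div_lt_iff₀ (by positivity)]
    have hd3 := lt_min_iff.1 hd2
    refine lt_of_le_of_lt (caraDist_le hd3.1 fun f hf => ?_) (hev (y := dist (x m) (x n) / (R / 2)) ?_)
    · obtain ⟨F, hF, hfF⟩ := hext3 f hf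
      rw [hfF (hxΩ m), hfF (hxΩ n)]
      have hsub : ball (x n) (R / 2) ⊆ U := by
        refine Subset.trans (ball_subset_ball' ?_) hb
        linarith [hn'.1]
      refine schwarz ⟨hF.1.mono hsub, fun w hw => hF.2 w (hsub hw)⟩ ?_
      have := (div_lt_one (by positivity : 0 < R / 2)).1 hd3.1
      exact this
    · rw [Real.dist_eq, sub_zero, abs_of_nonneg (by positivity)]
      exact hd3.2)
  exact haD (tendsto_nhds_unique hxa hxz ▸ hz)

end

end HHR

/-- Every HHR bounded domain `D` in a complex Banach space (a bounded domain
admitting a holomorphic embedding into a Hilbert ball and whose squeezing function has a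
strictly positive lower bound) is complete with respect to the Carathéodory distance, and
hence is a domain of holomorphy. -/
theorem stmt_10
    {V : Type*} [NormedAddCommGroup V] [NormedSpace ℂ V] [CompleteSpace V]
    {H : Type*} [NormedAddCommGroup H] [InnerProductSpace ℂ H] [CompleteSpace H]
    (D : Set V) (hD : IsOpen D) (hDc : IsConnected D) (hDb : Bornology.IsBounded D)
    (hemb : ∃ f : V → H, ∃ g : H → V,
      DifferentiableOn ℂ f D ∧ IsOpen (f '' D) ∧ Set.InjOn f D ∧
      DifferentiableOn ℂ g (f '' D) ∧ (∀ z ∈ D, g (f z) = z) ∧ f '' D ⊆ ball (0 : H) 1)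
    (hHHR : ∃ r : ℝ, 0 < r ∧ ∀ p ∈ D, r ≤ squeezingFun H D p) :
    (∀ x : ℕ → V, (∀ n, x n ∈ D) →
      (∀ ε : ℝ, 0 < ε → ∃ N : ℕ, ∀ m ≥ N, ∀ n ≥ N, caraDist D (x m) (x n) < ε) →
      ∃ z ∈ D, Filter.Tendsto (fun n => caraDist D (x n) z) Filter.atTop (nhds 0)) ∧
    IsDomainOfHolomorphy D := by
  have hc := fun (x : ℕ → V) (hx : ∀ n, x n ∈ D) hC => HHR.complete hD hDc hHHR (x := x) hx hC
  refine ⟨fun x hx hC => ?_, HHR.dom_hol hD hc⟩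
  obtain ⟨z, hz, hxz⟩ := hc x hx hC
  exact ⟨z, hz, HHR.caraDist_tendsto hD hx hz hxz⟩
end

section
/- Let h : D → D' be a biholomorphic map between the open unit balls D, D' of complex Banach spaces V, V' with h(0) = 0. Then h is the restriction to D of its derivative h'(0) : V → V', which is a surjective linear isometry; consequently h extends continuously to the closed balls and maps ∂D onto ∂D'. -/
open Metric Set

/-- Holomorphic self-maps of the unit ball, tangent to the identity at the origin. -/
structure TangentSelfMap {V : Type*} [NormedAddCommGroup V] [NormedSpace ℂ V]
    (F : V → V) : Prop where
  diff : DifferentiableOn ℂ F (ball (0 : V) 1)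
  maps : MapsTo F (ball (0 : V) 1) (ball (0 : V) 1)
  zero : F 0 = 0
  deriv : HasFDerivAt F (ContinuousLinearMap.id ℂ V) 0

namespace TangentSelfMap

variable {V : Type*} [NormedAddCommGroup V] [NormedSpace ℂ V] {F : V → V}

theorem iter (hF : TangentSelfMap F) (n : ℕ) : TangentSelfMap (F^[n]) := by
  induction n with
  | zero =>
    exact ⟨differentiableOn_id, mapsTo_id _, rfl, hasFDerivAt_id 0⟩
  | succ n ih =>
    rw [Function.iterate_succ]
    refine ⟨ih.diff.comp hF.diff hF.maps, ih.maps.comp hF.maps, ?_, ?_⟩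
    · simp [hF.zero, ih.zero]
    · have h1 : HasFDerivAt (F^[n]) (ContinuousLinearMap.id ℂ V) (F 0) := by
        rw [hF.zero]; exact ih.deriv
      simpa using h1.comp (0 : V) hF.deriv

theorem norm_le (hF : TangentSelfMap F) {z : V} (hz : ‖z‖ < 1) : ‖F z‖ ≤ ‖z‖ :=
  Complex.norm_le_norm_of_mapsTo_ball hF.diff
    (hF.maps.mono_right ball_subset_closedBall) hF.zero hz

theorem pow_bound (hF : TangentSelfMap F) {z : V} (hz : ‖z‖ < 1) (n : ℕ)
    (ho : (fun w => F w - w) =o[nhds 0] (fun w => ‖w‖ ^ n)) :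
    ‖F z - z‖ ≤ 2 * ‖z‖ ^ (n + 1) := by
  have := Complex.dist_le_mul_div_pow_of_mapsTo_ball_of_isLittleO
    (f := fun w => F w - w) (c := (0 : V)) (z := z) (R₁ := 1) (R₂ := 2) (n := n)
    (hF.diff.sub differentiableOn_id) ?_ ?_ (by simpa using hz)
  · simpa [hF.zero, dist_eq_norm] using this
  · intro w hw
    have hw1 : ‖w‖ < 1 := by simpa using hw
    have h2 := hF.norm_le hw1
    have h3 := norm_sub_le (F w) w
    simp only [hF.zero, sub_zero, mem_closedBall, dist_zero_right]
    linarith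
  · simpa [hF.zero] using ho

theorem sq_bound (hF : TangentSelfMap F) {z : V} (hz : ‖z‖ < 1) :
    ‖F z - z‖ ≤ 2 * ‖z‖ ^ 2 := by
  refine hF.pow_bound hz 1 ?_
  have := hF.deriv.isLittleO
  simp only [hF.zero, sub_zero, ContinuousLinearMap.id_apply] at this
  simpa using this.norm_right

theorem lip (hF : TangentSelfMap F) {w z : V} (hw : ‖w‖ < 1 / 37) (hz : ‖z‖ < 1 / 37) :
    ‖(F w - w) - (F z - z)‖ ≤ 1 / 2 * ‖w - z‖ := by
  have hsub : ∀ x ∈ ball z (2 / 37), ‖x‖ < 3 / 37 := by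
    intro x hx
    rw [mem_ball, dist_eq_norm] at hx
    have h1 : ‖x‖ ≤ ‖x - z‖ + ‖z‖ := by simpa using norm_add_le (x - z) z
    linarith
  have hG : ∀ x : V, ‖x‖ < 3 / 37 → ‖F x - x‖ ≤ 18 / 37 ^ 2 := by
    intro x hx
    have := hF.sq_bound (z := x) (by linarith)
    nlinarith [norm_nonneg x]
  have := Complex.dist_le_div_mul_dist_of_mapsTo_ball
    (f := fun w => F w - w) (c := z) (z := w) (R₁ := 2 / 37) (R₂ := 1 / 37)
    ((hF.diff.sub differentiableOn_id).mono ?_) ?_ ?_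
  · rw [dist_eq_norm, dist_eq_norm] at this
    convert this using 2
    norm_num
  · intro x hx
    have := hsub x hx
    rw [mem_ball_zero_iff]; linarith
  · intro x hx
    have h1 := hG x (hsub x hx)
    have h2 := hG z (by linarith)
    have h3 := norm_sub_le (F x - x) (F z - z)
    rw [mem_closedBall, dist_eq_norm]
    linarith
  · have h3 := norm_sub_le w z
    rw [mem_ball, dist_eq_norm]
    linarith

theorem step (hF : TangentSelfMap F) {z : V} (hz : ‖z‖ < 1 / 37) {M : ℝ}
    (hM : ∀ k, ‖F^[k] z - z‖ ≤ M) : ‖F z - z‖ ≤ M / 2 := by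
  have key : ∀ n : ℕ, ‖F^[n] z - z - (n : ℝ) • (F z - z)‖ ≤ n * (M / 2) := by
    intro n
    induction n with
    | zero => simp
    | succ n ih =>
      have hn : ‖F^[n] z‖ < 1 / 37 := ((hF.iter n).norm_le (by linarith)).trans_lt hz
      have h1 := hF.lip hn hz
      have h2 := hM n
      have e : F^[n+1] z - z - ((n + 1 : ℕ) : ℝ) • (F z - z)
          = (F^[n] z - z - (n : ℝ) • (F z - z))
            + ((F (F^[n] z) - F^[n] z) - (F z - z)) := by
        rw [Function.iterate_succ_apply']
        push_cast
        rw [add_smul, one_smul]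
        abel
      rw [e]
      refine (norm_add_le _ _).trans ?_
      push_cast
      linarith
  by_contra! hlt
  obtain ⟨n, hn⟩ := exists_nat_gt (M / (‖F z - z‖ - M / 2))
  rw [div_lt_iff₀ (by linarith)] at hn
  have h1 := key n
  have h2 := norm_sub_norm_le ((n : ℝ) • (F z - z)) (F^[n] z - z)
  rw [norm_sub_rev ((n : ℝ) • (F z - z)) (F^[n] z - z)] at h2
  rw [norm_smul, Real.norm_natCast] at h2
  have h3 := hM n
  linarith

theorem eq_near (hF : TangentSelfMap F) {z : V} (hz : ‖z‖ < 1 / 37) : F z = z := by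
  have key : ∀ n : ℕ, ∀ j : ℕ, ‖F^[j] z - z‖ ≤ 2 * (1 / 2) ^ n := by
    intro n
    induction n with
    | zero =>
      intro j
      have h1 := (hF.iter j).norm_le (z := z) (by linarith)
      have h2 := norm_sub_le (F^[j] z) z
      simp only [pow_zero]
      linarith
    | succ n ih =>
      intro j
      have := (hF.iter j).step hz (M := 2 * (1 / 2) ^ n) (fun k => by
        rw [← Function.iterate_mul]; exact ih _)
      rw [pow_succ]
      linarith
  have hlim : Filter.Tendsto (fun n : ℕ => (2 : ℝ) * (1 / 2) ^ n) Filter.atTop (nhds (2 * 0)) :=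
    (tendsto_pow_atTop_nhds_zero_of_lt_one (by norm_num) (by norm_num)).const_mul 2
  have h0 : ‖F z - z‖ ≤ 2 * 0 := ge_of_tendsto' hlim (fun n => by simpa using key n 1)
  rw [mul_zero, norm_le_zero_iff] at h0
  exact sub_eq_zero.mp h0

/-- **Cartan's uniqueness theorem** for the unit ball of a complex normed space. -/
theorem eq_self (hF : TangentSelfMap F) {z : V} (hz : ‖z‖ < 1) : F z = z := by
  have hloc : (fun w => F w - w) =ᶠ[nhds 0] (fun _ => (0 : V)) := by
    filter_upwards [ball_mem_nhds (0 : V) (show (0 : ℝ) < 1 / 37 by norm_num)] with w hw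
    rw [mem_ball_zero_iff] at hw
    exact sub_eq_zero.mpr (hF.eq_near hw)
  have key : ∀ n : ℕ, ‖F z - z‖ ≤ 2 * ‖z‖ ^ (n + 1) := fun n =>
    hF.pow_bound hz n ((Asymptotics.isLittleO_zero _ _).congr' hloc.symm (by rfl))
  have hlim : Filter.Tendsto (fun n : ℕ => (2 : ℝ) * ‖z‖ ^ (n + 1)) Filter.atTop
      (nhds (2 * 0)) :=
    ((tendsto_pow_atTop_nhds_zero_of_lt_one (norm_nonneg z) hz).comp
      (Filter.tendsto_add_atTop_nat 1)).const_mul 2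
  have h0 : ‖F z - z‖ ≤ 2 * 0 := ge_of_tendsto' hlim key
  rw [mul_zero, norm_le_zero_iff] at h0
  exact sub_eq_zero.mp h0

end TangentSelfMap

/-- A biholomorphic map `h` between the open unit balls of complex Banach
spaces `V, V'` with `h(0) = 0` is the restriction of its derivative `h'(0)`, which is a
surjective linear isometry; hence `h` extends continuously to the closed balls and maps the
unit sphere of `V` onto that of `V'`. -/
theorem stmt_13
    {V : Type*} [NormedAddCommGroup V] [NormedSpace ℂ V] [CompleteSpace V]
    {V' : Type*} [NormedAddCommGroup V'] [NormedSpace ℂ V'] [CompleteSpace V']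
    (h : V → V') (g : V' → V)
    (hhol : DifferentiableOn ℂ h (ball (0 : V) 1))
    (himg : h '' ball (0 : V) 1 = ball (0 : V') 1)
    (hinj : Set.InjOn h (ball (0 : V) 1))
    (hghol : DifferentiableOn ℂ g (ball (0 : V') 1))
    (hgh : ∀ z ∈ ball (0 : V) 1, g (h z) = z)
    (h0 : h 0 = 0) :
    ∃ T : V →L[ℂ] V',
      (T : V → V') = fderiv ℂ h 0 ∧
      (∀ z ∈ ball (0 : V) 1, h z = T z) ∧
      Isometry T ∧ Function.Surjective T ∧
      (T : V → V') '' sphere (0 : V) 1 = sphere (0 : V') 1 := by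
  have hmaps : MapsTo h (ball (0 : V) 1) (ball (0 : V') 1) := by
    rw [← himg]; exact mapsTo_image h _
  have hgmaps : MapsTo g (ball (0 : V') 1) (ball (0 : V) 1) := by
    rw [← himg]
    rintro _ ⟨z, hz, rfl⟩
    rw [hgh z hz]; exact hz
  have hhg : ∀ y ∈ ball (0 : V') 1, h (g y) = y := by
    rw [← himg]
    rintro _ ⟨z, hz, rfl⟩
    rw [hgh z hz]
  have m0 : (0 : V) ∈ ball (0 : V) 1 := mem_ball_self one_pos
  have m0' : (0 : V') ∈ ball (0 : V') 1 := mem_ball_self one_pos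
  have g0 : g 0 = 0 := by have := hgh 0 m0; rwa [h0] at this
  have dh : HasFDerivAt h (fderiv ℂ h 0) 0 :=
    (hhol.differentiableAt (isOpen_ball.mem_nhds m0)).hasFDerivAt
  have dg : HasFDerivAt g (fderiv ℂ g 0) 0 :=
    (hghol.differentiableAt (isOpen_ball.mem_nhds m0')).hasFDerivAt
  set T := fderiv ℂ h 0 with hT
  set S := fderiv ℂ g 0 with hS
  have nT : ‖T‖ ≤ 1 := Complex.norm_fderiv_le_one_of_mapsTo_ball hhol
    (by rw [h0]; exact hmaps.mono_right ball_subset_closedBall) one_pos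
  have nS : ‖S‖ ≤ 1 := Complex.norm_fderiv_le_one_of_mapsTo_ball hghol
    (by rw [g0]; exact hgmaps.mono_right ball_subset_closedBall) one_pos
  have dg' : HasFDerivAt g S (h 0) := by rw [h0]; exact dg
  have dh' : HasFDerivAt h T (g 0) := by rw [g0]; exact dh
  have ST : S.comp T = ContinuousLinearMap.id ℂ V := by
    refine (dg'.comp (0 : V) dh).unique ((hasFDerivAt_id (0 : V)).congr_of_eventuallyEq ?_)
    filter_upwards [isOpen_ball.mem_nhds m0] with z hz using hgh z hz
  have TS : T.comp S = ContinuousLinearMap.id ℂ V' := by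
    refine (dh'.comp (0 : V') dg).unique ((hasFDerivAt_id (0 : V')).congr_of_eventuallyEq ?_)
    filter_upwards [isOpen_ball.mem_nhds m0'] with z hz using hhg z hz
  have STa : ∀ x, S (T x) = x := fun x => DFunLike.congr_fun ST x
  have TSa : ∀ y, T (S y) = y := fun y => DFunLike.congr_fun TS y
  have lT : ∀ x, ‖T x‖ ≤ ‖x‖ := fun x => by
    simpa using T.le_of_opNorm_le nT x
  have lS : ∀ x, ‖S x‖ ≤ ‖x‖ := fun x => by
    simpa using S.le_of_opNorm_le nS x
  have nTx : ∀ x, ‖T x‖ = ‖x‖ := fun x =>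
    le_antisymm (lT x) (by simpa [STa] using lS (T x))
  have hF : TangentSelfMap (fun z => S (h z)) := by
    refine ⟨S.differentiable.comp_differentiableOn hhol, ?_, by simp [h0], ?_⟩
    · intro z hz
      have := hmaps hz
      rw [mem_ball_zero_iff] at this ⊢
      exact (lS _).trans_lt this
    · have := S.hasFDerivAt.comp (0 : V) dh
      rw [ST] at this
      exact this
  refine ⟨T, rfl, ?_, AddMonoidHomClass.isometry_of_norm T nTx, fun y => ⟨S y, TSa y⟩, ?_⟩
  · intro z hz
    have := hF.eq_self (mem_ball_zero_iff.mp hz)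
    rw [← TSa (h z)]
    exact congrArg T this
  · ext y
    simp only [mem_image, mem_sphere_zero_iff_norm]
    constructor
    · rintro ⟨x, hx, rfl⟩
      rw [nTx, hx]
    · intro hy
      exact ⟨S y, by rw [← nTx, TSa, hy], TSa y⟩
end

section
/- Let Ω be a uniformly elliptic domain in a Banach space V with constants 0 < r < R, let p ∈ Ω and q ∈ ∂Ω satisfy ‖p − q‖ = d(p, ∂Ω), and let q'' be the point with Ω ⊂ B_V(q'', R) and q ∈ ∂B_V(q'', R) from uniform ellipticity. Then either p is colinear with q and q'', or there exists q₁ ∈ ∂Ω ∩ ∂B_V(q'', R) colinear with p and q'' satisfying ‖p − q₁‖ = ‖p − q‖ = d(p, ∂Ω). -/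
open Metric Set

/-- A bounded convex domain `Ω` in a Banach space `V` is uniformly elliptic with constants
`0 < r < R` if each boundary point `q` admits unique points `q', q''` colinear with `q`
such that `B(q', r) ⊆ Ω ⊆ B(q'', R)` and `q ∈ ∂B(q', r) ∩ ∂B(q'', R)`. -/
def UniformlyElliptic {V : Type*} [NormedAddCommGroup V] [NormedSpace ℂ V]
    (Ω : Set V) (r R : ℝ) : Prop :=
  0 < r ∧ r < R ∧
  ∀ q ∈ frontier Ω, ∃! qq : V × V,
    ball qq.1 r ⊆ Ω ∧ Ω ⊆ ball qq.2 R ∧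
    q ∈ frontier (ball qq.1 r) ∧ q ∈ frontier (ball qq.2 R) ∧
    Collinear ℝ ({q, qq.1, qq.2} : Set V)

/-- Let `Ω` be uniformly elliptic with constants `0 < r < R`, let `p ∈ Ω`,
`q ∈ ∂Ω` with `‖p − q‖ = d(p, ∂Ω)`, and let `q''` satisfy `Ω ⊆ B(q'', R)` and
`q ∈ ∂B(q'', R)`.  Then either `p` is colinear with `q` and `q''`, or there is
`q₁ ∈ ∂Ω ∩ ∂B(q'', R)` colinear with `p` and `q''` with `‖p − q₁‖ = ‖p − q‖`. -/
theorem stmt_17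
    {V : Type*} [NormedAddCommGroup V] [NormedSpace ℂ V] [CompleteSpace V]
    (Ω : Set V) (hΩ : IsOpen Ω) (hΩc : IsConnected Ω) (hΩb : Bornology.IsBounded Ω)
    (hconv : Convex ℝ Ω)
    (r R : ℝ) (hUE : UniformlyElliptic Ω r R)
    (p : V) (hp : p ∈ Ω)
    (q : V) (hq : q ∈ frontier Ω) (hdist : ‖p - q‖ = infDist p (frontier Ω))
    (q'' : V) (hsub : Ω ⊆ ball q'' R) (hqfr : q ∈ frontier (ball q'' R)) :
    Collinear ℝ ({p, q, q''} : Set V) ∨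
    ∃ q₁ ∈ frontier Ω ∩ frontier (ball q'' R),
      Collinear ℝ ({p, q₁, q''} : Set V) ∧ ‖p - q₁‖ = ‖p - q‖ := by
  obtain ⟨hr, hrR, -⟩ := hUE
  have hR : 0 < R := hr.trans hrR
  rw [frontier_ball q'' hR.ne', mem_sphere, dist_eq_norm] at hqfr
  by_cases hpq : p = q''
  · left
    subst hpq
    have : ({p, q, p} : Set V) = {p, q} := by
      ext x
      simp only [mem_insert_iff, mem_singleton_iff]
      tauto
    rw [this]
    exact collinear_pair ℝ p q
  right
  have hs : 0 < ‖p - q''‖ := norm_pos_iff.2 (sub_ne_zero.2 hpq)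
  have hsR : ‖p - q''‖ < R := by
    have := hsub hp
    rwa [mem_ball, dist_eq_norm] at this
  obtain ⟨c, hc⟩ : ∃ c : ℝ, c = R / ‖p - q''‖ := ⟨_, rfl⟩
  have hcs : c * ‖p - q''‖ = R := by rw [hc]; field_simp
  have hc1 : 1 < c := by rw [hc, one_lt_div hs]; exact hsR
  obtain ⟨q₁, hq₁⟩ : ∃ q₁ : V, q₁ = q'' + c • (p - q'') := ⟨_, rfl⟩
  have hn1 : ‖q₁ - q''‖ = R := by
    rw [hq₁, add_sub_cancel_left, norm_smul, Real.norm_of_nonneg (by linarith), hcs]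
  have hd1 : q₁ - p = (c - 1) • (p - q'') := by
    rw [hq₁, sub_smul, one_smul]; abel
  have hn2 : ‖q₁ - p‖ = R - ‖p - q''‖ := by
    rw [hd1, norm_smul, Real.norm_of_nonneg (by linarith), sub_mul, hcs, one_mul]
  have htri : R ≤ ‖p - q‖ + ‖p - q''‖ := by
    rw [← hqfr, norm_sub_rev p q]
    exact norm_sub_le_norm_sub_add_norm_sub q p q''
  have hnot : q₁ ∉ Ω := by
    intro h
    have := hsub h
    rw [mem_ball, dist_eq_norm, hn1] at this
    exact lt_irrefl _ this
  have hmeet : (segment ℝ p q₁ ∩ frontier Ω).Nonempty := by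
    by_contra hne
    have key : ∀ y ∈ segment ℝ p q₁, y ∉ Ω → y ∉ closure Ω := by
      intro y hy hyΩ hyc
      refine hne ⟨y, hy, ?_⟩
      rw [hΩ.frontier_eq]
      exact ⟨hyc, hyΩ⟩
    obtain ⟨y, -, hy1, hy2⟩ := (convex_segment p q₁).isPreconnected Ω (closure Ω)ᶜ hΩ
      isClosed_closure.isOpen_compl
      (fun y hy => (em (y ∈ Ω)).imp id (key y hy))
      ⟨p, left_mem_segment ℝ p q₁, hp⟩
      ⟨q₁, right_mem_segment ℝ p q₁, key _ (right_mem_segment ℝ p q₁) hnot⟩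
    exact hy2 (subset_closure hy1)
  obtain ⟨x, hxs, hxf⟩ := hmeet
  have hdx : ‖p - q‖ ≤ ‖p - x‖ := by
    rw [hdist, ← dist_eq_norm]
    exact infDist_le_dist_of_mem hxf
  rw [segment_eq_image'] at hxs
  obtain ⟨t, ⟨ht0, ht1⟩, rfl⟩ := hxs
  have hnx : ‖p - (p + t • (q₁ - p))‖ = t * ‖q₁ - p‖ := by
    rw [sub_add_cancel_left, norm_neg, norm_smul, Real.norm_of_nonneg ht0]
  rw [hnx, hn2] at hdx
  have ht : t = 1 := by
    by_contra h
    have : t < 1 := lt_of_le_of_ne ht1 h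
    nlinarith
  subst ht
  beta_reduce at hxf
  rw [one_smul, add_sub_cancel] at hxf
  refine ⟨q₁, ⟨hxf, ?_⟩, ?_, ?_⟩
  · rw [frontier_ball q'' hR.ne', mem_sphere, dist_eq_norm, hn1]
  · rw [collinear_iff_of_mem (p₀ := q'') (by simp)]
    refine ⟨p - q'', ?_⟩
    intro y hy
    simp only [mem_insert_iff, mem_singleton_iff] at hy
    rcases hy with rfl | rfl | rfl
    · exact ⟨1, by simp⟩
    · exact ⟨c, by rw [hq₁, vadd_eq_add, add_comm]⟩
    · exact ⟨0, by simp⟩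
  · rw [norm_sub_rev p q₁, hn2]
    linarith
end
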